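/- Under any uniformly avoiding source μ, suppose (σ-k)^k > 2k - 2, fix a k-tuple α ∈ (Fin σ)^k and an index i ≥ 2k - 1, and let C be the event that W_j ≠ α for every j ∈ {i-k+1, …, i-1, i+1, …, i+k-1}. If μ(C) > 0, then the conditional probability that α occurs at position i given C satisfies μ(W_i = α | C) ≤ 1/((σ-k)^k - (2k - 2)). -/

import Mathlib

open MeasureTheory ProbabilityTheory
open scoped Classical ENNReal

noncomputable section

/-- The `k`-window at position `i` of an infinite string `ω : ℕ → Fin σ`. -/
def Window {σ : ℕ} (k i : ℕ) (ω : ℕ → Fin σ) : Fin k → Fin σ :=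
  fun t => ω (i + t)

/-- A *uniformly avoiding source*: a probability measure `μ` on `ℕ → Fin σ`
(with the product σ-algebra) such that (i) almost surely the first `k`
coordinates are pairwise distinct, and (ii) conditioned on any positive-probability
history of length `n ≥ k` whose last `k` entries are pairwise distinct, the next
character is uniform on the `σ - k` characters not among the last `k` entries. -/
def UniformlyAvoiding {σ : ℕ} (k : ℕ) (μ : Measure (ℕ → Fin σ)) : Prop :=
  IsProbabilityMeasure μ ∧
  (∀ᵐ ω ∂μ, ∀ i j : ℕ, i < k → j < k → i ≠ j → ω i ≠ ω j) ∧
  ∀ n : ℕ, k ≤ n → ∀ a : ℕ → Fin σ,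
    μ {ω | ∀ t < n, ω t = a t} ≠ 0 →
    (∀ p q : ℕ, n - k ≤ p → p < n → n - k ≤ q → q < n → p ≠ q → a p ≠ a q) →
    ∀ b : Fin σ,
      (μ[|{ω | ∀ t < n, ω t = a t}]) {ω | ω n = b} =
        if ∃ t : ℕ, n - k ≤ t ∧ t < n ∧ a t = b then 0
        else 1 / ((σ - k : ℕ) : ℝ≥0∞)

lemma aux_cyl_meas {σ : ℕ} (n : ℕ) (a : ℕ → Fin σ) :
    MeasurableSet {ω : ℕ → Fin σ | ∀ t < n, ω t = a t} := by
  have : {ω : ℕ → Fin σ | ∀ t < n, ω t = a t} = ⋂ t, ⋂ (_ : t < n), (fun ω => ω t) ⁻¹' {a t} := by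
    ext ω; simp
  rw [this]
  exact MeasurableSet.iInter fun t => MeasurableSet.iInter fun _ =>
    (measurable_pi_apply t) (measurableSet_singleton _)

lemma aux_succ {σ : ℕ} (n : ℕ) (a : ℕ → Fin σ) :
    {ω : ℕ → Fin σ | ∀ t < n + 1, ω t = a t} =
      {ω | ∀ t < n, ω t = a t} ∩ {ω | ω n = a n} := by
  ext ω
  simp only [Set.mem_ofPred_eq, Set.mem_inter_iff]
  exact Nat.forall_lt_succ_right

lemma aux_good {σ k : ℕ} (μ : Measure (ℕ → Fin σ)) (hμ : UniformlyAvoiding k μ)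
    (n : ℕ) (a : ℕ → Fin σ) (h : μ {ω | ∀ t < n, ω t = a t} ≠ 0) :
    ∀ p q : ℕ, p < q → q < n → q < p + k → a p ≠ a q := by
  obtain ⟨hP, h1, h2⟩ := hμ
  induction n with
  | zero => intro p q _ hq; omega
  | succ n ih =>
    have hn : μ {ω | ∀ t < n, ω t = a t} ≠ 0 := by
      intro h0
      apply h
      rw [aux_succ]
      exact measure_mono_null Set.inter_subset_left h0
    have ih := ih hn
    intro p q hpq hq hqk
    by_cases hq' : q < n
    · exact ih p q hpq hq' hqk
    have hqn : q = n := by omega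
    subst hqn
    by_cases hk : k ≤ q
    · intro heq
      have := h2 q hk a hn (fun x y hx hx' hy hy' hxy => by
        rcases lt_or_gt_of_ne hxy with hl | hl
        · exact ih x y hl hy' (by omega)
        · exact (ih y x hl hx' (by omega)).symm) (a q)
      rw [if_pos ⟨p, by omega, hpq, heq⟩, cond_apply (aux_cyl_meas q a)] at this
      rw [aux_succ] at h
      rcases mul_eq_zero.1 this with h3 | h3
      · exact measure_ne_top _ _ (ENNReal.inv_eq_zero.1 h3)
      · exact h h3
    · intro heq
      apply h
      refine measure_mono_null ?_ (ae_iff.1 h1)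
      intro ω hω hc
      refine hc p q (by omega) (by omega) (by omega) ?_
      rw [hω p (by omega), hω q (by omega), heq]

lemma aux_step {σ k : ℕ} (μ : Measure (ℕ → Fin σ)) (hμ : UniformlyAvoiding k μ)
    (n : ℕ) (hn : k ≤ n) (a : ℕ → Fin σ) :
    μ {ω | ∀ t < n + 1, ω t = a t} ≤ ((σ - k : ℕ) : ℝ≥0∞)⁻¹ * μ {ω | ∀ t < n, ω t = a t} := by
  have hg := aux_good μ hμ n a
  obtain ⟨hP, h1, h2⟩ := hμ
  rw [aux_succ]
  by_cases h0 : μ {ω | ∀ t < n, ω t = a t} = 0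
  · rw [measure_mono_null Set.inter_subset_left h0]; exact zero_le
  have hg := hg h0
  have := h2 n hn a h0 (fun x y hx hx' hy hy' hxy => by
        rcases lt_or_gt_of_ne hxy with hl | hl
        · exact hg x y hl hy' (by omega)
        · exact (hg y x hl hx' (by omega)).symm) (a n)
  rw [← cond_mul_eq_inter (aux_cyl_meas n a), this]
  gcongr
  split_ifs <;> simp

lemma aux_steps {σ k : ℕ} (μ : Measure (ℕ → Fin σ)) (hμ : UniformlyAvoiding k μ)
    (n : ℕ) (hn : k ≤ n) (a : ℕ → Fin σ) (m : ℕ) :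
    μ {ω | ∀ t < n + m, ω t = a t} ≤
      (((σ - k : ℕ) : ℝ≥0∞)⁻¹) ^ m * μ {ω | ∀ t < n, ω t = a t} := by
  induction m with
  | zero => simp
  | succ m ih =>
    refine (aux_step μ hμ (n + m) (by omega) a).trans ?_
    rw [pow_succ', mul_assoc]
    gcongr

lemma aux_window {σ k : ℕ} (hσ : k < σ) (μ : Measure (ℕ → Fin σ)) (hμ : UniformlyAvoiding k μ)
    (α : Fin k → Fin σ) (j : ℕ) (hj : k ≤ j) :
    μ {ω | Window k j ω = α} ≤ (((σ - k) ^ k : ℕ) : ℝ≥0∞)⁻¹ := by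
  have hP := hμ.1
  let z : Fin σ := ⟨0, by omega⟩
  let e : (Fin j → Fin σ) → ℕ → Fin σ := fun a t =>
    if h : t < j then a ⟨t, h⟩ else if h' : t - j < k then α ⟨t - j, h'⟩ else z
  have hsub : {ω | Window k j ω = α} ⊆
      ⋃ a ∈ (Finset.univ : Finset (Fin j → Fin σ)), {ω | ∀ t < j + k, ω t = e a t} := by
    intro ω hω
    simp only [Finset.mem_univ, Set.iUnion_true, Set.mem_iUnion, Set.mem_ofPred_eq]
    refine ⟨fun t => ω t, fun t ht => ?_⟩
    by_cases h : t < j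
    · simp [e, h]
    · have h' : t - j < k := by omega
      have := congrFun hω ⟨t - j, h'⟩
      simp only [Window] at this
      simp only [e, h, h', dif_pos, dif_neg, not_false_eq_true]
      rw [← this]
      congr 1
      omega
  have hsum : ∑ a : Fin j → Fin σ, μ {ω | ∀ t < j, ω t = e a t} = 1 := by
    have hm : Measurable (fun (ω : ℕ → Fin σ) (t : Fin j) => ω t) :=
      measurable_pi_lambda _ fun t => measurable_pi_apply _
    have := sum_measure_preimage_singleton (μ := μ) (Finset.univ : Finset (Fin j → Fin σ))
      (f := fun (ω : ℕ → Fin σ) (t : Fin j) => ω t)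
      (fun y _ => hm (measurableSet_singleton y))
    simp only [Finset.coe_univ, Set.preimage_univ, measure_univ] at this
    rw [← this]
    refine Finset.sum_congr rfl fun a _ => ?_
    congr 1
    ext ω
    simp only [Set.mem_ofPred_eq, Set.mem_preimage, Set.mem_singleton_iff, funext_iff]
    constructor
    · intro h t
      rw [h t t.2]; simp [e]
    · intro h t ht
      have := h ⟨t, ht⟩
      simp [e, ht, ← this]
  calc μ {ω | Window k j ω = α} ≤ _ := measure_mono hsub
    _ ≤ ∑ a : Fin j → Fin σ, μ {ω | ∀ t < j + k, ω t = e a t} := measure_biUnion_finset_le _ _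
    _ ≤ ∑ a : Fin j → Fin σ, (((σ - k : ℕ) : ℝ≥0∞)⁻¹) ^ k * μ {ω | ∀ t < j, ω t = e a t} :=
        Finset.sum_le_sum fun a _ => aux_steps μ hμ j hj (e a) k
    _ = _ := by
        rw [← Finset.mul_sum, hsum, mul_one, Nat.cast_pow, ENNReal.inv_pow]

lemma aux_wmeas {σ : ℕ} (k j : ℕ) (α : Fin k → Fin σ) :
    MeasurableSet {ω : ℕ → Fin σ | Window k j ω = α} := by
  have hm : Measurable (fun ω : ℕ → Fin σ => Window k j ω) :=
    measurable_pi_lambda _ fun t => measurable_pi_apply _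
  exact hm (measurableSet_singleton α)

/-- Under any uniformly avoiding source `μ` with `(σ-k)^k > 2k - 2`, for a fixed
`k`-tuple `α` and index `i ≥ 2k - 1`, conditioned on the event `C` that `α` does not
occur at any of the positions `i-k+1, …, i-1, i+1, …, i+k-1`, the probability that
`α` occurs at position `i` is at most `1/((σ-k)^k - (2k-2))`. -/
theorem conditional_occurrence_prob_le {σ k : ℕ} (hk : 1 ≤ k) (hσ : k < σ)
    (μ : Measure (ℕ → Fin σ)) (hμ : UniformlyAvoiding k μ)
    (hbig : 2 * k - 2 < (σ - k) ^ k)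
    (α : Fin k → Fin σ) (i : ℕ) (hi : 2 * k - 1 ≤ i)
    (C : Set (ℕ → Fin σ))
    (hC : C = {ω | ∀ j : ℕ, i + 1 - k ≤ j → j ≤ i + k - 1 → j ≠ i → Window k j ω ≠ α})
    (hpos : μ C ≠ 0) :
    (μ[|C]) {ω | Window k i ω = α} ≤ 1 / (((σ - k) ^ k - (2 * k - 2) : ℕ) : ℝ≥0∞) := by
  have hP := hμ.1
  set N := (σ - k) ^ k with hN
  have hN0 : (N : ℝ≥0∞) ≠ 0 := by
    have : N ≠ 0 := by omega
    exact_mod_cast this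
  have hNt : (N : ℝ≥0∞) ≠ ⊤ := ENNReal.natCast_ne_top _
  let J : Finset ℕ := (Finset.Icc (i + 1 - k) (i + k - 1)).erase i
  have hJ : J.card = 2 * k - 2 := by
    rw [Finset.card_erase_of_mem (by simp; omega), Nat.card_Icc]; omega
  have hCc : C = (⋃ j ∈ J, {ω | Window k j ω = α})ᶜ := by
    rw [hC]; ext ω
    simp only [J, Set.mem_ofPred_eq, Set.mem_compl_iff, Set.mem_iUnion, Finset.mem_erase,
      Finset.mem_Icc, not_exists]
    constructor
    · intro h j hj; exact h j hj.2.1 hj.2.2 hj.1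
    · intro h j h1 h2 h3; exact h j ⟨h3, h1, h2⟩
  have hUm : MeasurableSet (⋃ j ∈ J, {ω : ℕ → Fin σ | Window k j ω = α}) :=
    Finset.measurableSet_biUnion _ fun j _ => aux_wmeas k j α
  have hCm : MeasurableSet C := hCc ▸ hUm.compl
  have hU : μ (⋃ j ∈ J, {ω | Window k j ω = α}) ≤ ((2 * k - 2 : ℕ) : ℝ≥0∞) * (N : ℝ≥0∞)⁻¹ := by
    refine (measure_biUnion_finset_le _ _).trans ?_
    refine (Finset.sum_le_card_nsmul _ _ ((N : ℝ≥0∞)⁻¹) fun j hj => ?_).trans ?_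
    · simp only [J, Finset.mem_erase, Finset.mem_Icc] at hj
      exact aux_window hσ μ hμ α j (by omega)
    · rw [hJ, nsmul_eq_mul]
  have hCl : ((N - (2 * k - 2) : ℕ) : ℝ≥0∞) * (N : ℝ≥0∞)⁻¹ ≤ μ C := by
    rw [hCc, prob_compl_eq_one_sub hUm]
    refine le_trans ?_ (tsub_le_tsub_left hU 1)
    rw [ENNReal.natCast_sub, ENNReal.sub_mul (fun _ _ => ENNReal.inv_ne_top.2 hN0),
      ENNReal.mul_inv_cancel hN0 hNt]
  have hW := aux_window hσ μ hμ α i (by omega)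
  have hM0 : ((N - (2 * k - 2) : ℕ) : ℝ≥0∞) ≠ 0 := by
    have : N - (2 * k - 2) ≠ 0 := by omega
    exact_mod_cast this
  have hMt : ((N - (2 * k - 2) : ℕ) : ℝ≥0∞) ≠ ⊤ := ENNReal.natCast_ne_top _
  rw [cond_apply hCm]
  calc (μ C)⁻¹ * μ (C ∩ {ω | Window k i ω = α})
      ≤ (((N - (2 * k - 2) : ℕ) : ℝ≥0∞) * (N : ℝ≥0∞)⁻¹)⁻¹ * (N : ℝ≥0∞)⁻¹ :=
        mul_le_mul' (ENNReal.inv_le_inv.2 hCl)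
          ((measure_mono Set.inter_subset_right).trans hW)
    _ = 1 / ((N - (2 * k - 2) : ℕ) : ℝ≥0∞) := by
        rw [ENNReal.mul_inv (Or.inl hM0) (Or.inl hMt), inv_inv, mul_assoc,
          ENNReal.mul_inv_cancel hN0 hNt, mul_one, one_div]
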